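/- Let X be a complete real inner product space, let C¹, C² ⊆ X be nonempty closed convex sets with C = C¹ ∩ C² nonempty, and let F : X → X be any map. Assume the normal cone decomposition N_C(x) = N_{C¹}(x) + N_{C²}(x) (Minkowski sum) holds for every x ∈ C (as it does, e.g., when C¹ and C² are polyhedral). Define the Davis–Yin operator T(z) = z − P_{C¹}(z) + P_{C²}(2P_{C¹}(z) − z − F(P_{C¹}(z))). Then a point x∘ ∈ X is a solution of the variational inequality VI(F, C) if and only if there exists z∘ ∈ X with z∘ = T(z∘) and x∘ = P_{C¹}(z∘). -/

import Mathlib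

open RealInnerProductSpace

/-!
Write `N_K x` for the normal cone of `K` at `x`. The projection onto a convex set `K` is the
resolvent of its normal cone: `P z = p` exactly when `p ∈ K` and `z - p ∈ N_K p`. A fixed point `z`
of the Davis–Yin operator is a point with `P₂ (2 • P₁ z - z - F (P₁ z)) = P₁ z`, so at `x = P₁ z`
the two resolvent identities give `z - x ∈ N_{C₁} x` and `x - z - F x ∈ N_{C₂} x`. These vectors
sum to `-F x`; conversely, `z = x + u` is a fixed point for any splitting `-F x = u + v` with
`u ∈ N_{C₁} x` and `v ∈ N_{C₂} x`. The variational inequality says `-F x ∈ N_{C₁ ∩ C₂} x`, and the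
decomposition of normal cones identifies the two conditions.
-/

section DavisYin

open Function
open scoped Pointwise

variable {X : Type*} [NormedAddCommGroup X] [InnerProductSpace ℝ X]
  {K C₁ C₂ : Set X} {P P₁ P₂ F : X → X} {x y z : X}

/-- The normal cone of `K` at `x`, the set of vectors making a non-acute angle with every direction
from `x` into `K`. Membership of `x` in `K` is not part of the definition. -/
def normalCone (K : Set X) (x : X) : Set X :=
  {v | ∀ y ∈ K, ⟪v, y - x⟫ ≤ 0}

/-- `P` is a metric projection onto `K`: it sends every point to a point of `K` nearest to it.
It is a property of `P` rather than a chosen map, so that it makes sense in incomplete spaces. -/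
def IsMetricProjection (K : Set X) (P : X → X) : Prop :=
  ∀ z, P z ∈ K ∧ ∀ x ∈ K, ‖z - P z‖ ≤ ‖z - x‖

/-- `x` is a solution of the variational inequality `VI(F, K)`. -/
def IsVISolution (F : X → X) (K : Set X) (x : X) : Prop :=
  x ∈ K ∧ ∀ y ∈ K, 0 ≤ ⟪F x, y - x⟫

/-- The Davis–Yin operator of the projections `P₁`, `P₂` and the map `F`, whose fixed points encode
solutions of the variational inequality for `F` over the intersection of the ranges. -/
def davisYin (P₁ P₂ F : X → X) (z : X) : X :=
  z - P₁ z + P₂ ((2 : ℝ) • P₁ z - z - F (P₁ z))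

theorem normalCone_add_subset_normalCone_inter :
    normalCone C₁ x + normalCone C₂ x ⊆ normalCone (C₁ ∩ C₂) x := by
  rintro _ ⟨u, hu, v, hv, rfl⟩ y hy
  rw [inner_add_left]
  exact add_nonpos (hu y hy.1) (hv y hy.2)

theorem isVISolution_iff_neg_mem_normalCone :
    IsVISolution F K x ↔ x ∈ K ∧ -F x ∈ normalCone K x := by
  simp only [IsVISolution, normalCone, Set.mem_ofPred_eq, inner_neg_left, Left.neg_nonpos_iff]

theorem norm_sub_sq_add_norm_sub_sq_le_of_sub_mem_normalCone
    (hzx : z - x ∈ normalCone K x) (hy : y ∈ K) :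
    ‖z - x‖ ^ 2 + ‖y - x‖ ^ 2 ≤ ‖z - y‖ ^ 2 := by
  have expansion := norm_sub_sq_real (z - x) (y - x)
  rw [sub_sub_sub_cancel_right] at expansion
  linarith [hzx y hy]

namespace IsMetricProjection

theorem sub_apply_mem_normalCone (hP : IsMetricProjection K P) (hK : Convex ℝ K) (z : X) :
    z - P z ∈ normalCone K (P z) := by
  have hz : P z ∈ K := (hP z).1
  have : Nonempty K := ⟨⟨P z, hz⟩⟩
  have bdd : BddBelow (Set.range fun w : K => ‖z - w‖) :=
    ⟨0, Set.forall_mem_range.2 fun _ => norm_nonneg _⟩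
  exact (norm_eq_iInf_iff_real_inner_le_zero hK hz).1 <|
    le_antisymm (le_ciInf fun w => (hP z).2 w w.2) (ciInf_le bdd ⟨P z, hz⟩)

theorem apply_eq_of_sub_mem_normalCone (hP : IsMetricProjection K P) (hx : x ∈ K)
    (hzx : z - x ∈ normalCone K x) : P z = x := by
  have pythagoras := norm_sub_sq_add_norm_sub_sq_le_of_sub_mem_normalCone hzx (hP z).1
  have nearest : ‖z - P z‖ ^ 2 ≤ ‖z - x‖ ^ 2 := by
    gcongr
    exact (hP z).2 x hx
  have : ‖P z - x‖ ^ 2 = 0 := le_antisymm (by linarith) (sq_nonneg _)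
  simpa [sub_eq_zero] using this

theorem apply_eq_iff (hP : IsMetricProjection K P) (hK : Convex ℝ K) :
    P z = x ↔ x ∈ K ∧ z - x ∈ normalCone K x := by
  refine ⟨?_, fun h => hP.apply_eq_of_sub_mem_normalCone h.1 h.2⟩
  rintro rfl
  exact ⟨(hP z).1, hP.sub_apply_mem_normalCone hK z⟩

end IsMetricProjection

theorem isFixedPt_davisYin_iff :
    IsFixedPt (davisYin P₁ P₂ F) z ↔ P₂ ((2 : ℝ) • P₁ z - z - F (P₁ z)) = P₁ z := by
  rw [IsFixedPt, davisYin, sub_add_eq_add_sub, sub_eq_iff_eq_add, add_right_inj]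

theorem isFixedPt_davisYin_and_eq_apply_iff
    (hC₁ : Convex ℝ C₁) (hC₂ : Convex ℝ C₂)
    (hP₁ : IsMetricProjection C₁ P₁) (hP₂ : IsMetricProjection C₂ P₂) :
    IsFixedPt (davisYin P₁ P₂ F) z ∧ x = P₁ z ↔
      x ∈ C₁ ∩ C₂ ∧ z - x ∈ normalCone C₁ x ∧ -F x - (z - x) ∈ normalCone C₂ x := by
  have residual : (2 : ℝ) • x - z - F x - x = -F x - (z - x) := by module
  calc IsFixedPt (davisYin P₁ P₂ F) z ∧ x = P₁ z
      ↔ P₂ ((2 : ℝ) • x - z - F x) = x ∧ P₁ z = x := by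
        rw [isFixedPt_davisYin_iff, eq_comm (a := x)]
        exact and_congr_left fun h => by rw [h]
    _ ↔ x ∈ C₁ ∩ C₂ ∧ z - x ∈ normalCone C₁ x ∧ -F x - (z - x) ∈ normalCone C₂ x := by
        rw [hP₁.apply_eq_iff hC₁, hP₂.apply_eq_iff hC₂, residual, Set.mem_inter_iff]
        tauto

theorem exists_isFixedPt_davisYin_iff
    (hC₁ : Convex ℝ C₁) (hC₂ : Convex ℝ C₂)
    (hP₁ : IsMetricProjection C₁ P₁) (hP₂ : IsMetricProjection C₂ P₂) :
    (∃ z, IsFixedPt (davisYin P₁ P₂ F) z ∧ x = P₁ z) ↔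
      x ∈ C₁ ∩ C₂ ∧ -F x ∈ normalCone C₁ x + normalCone C₂ x := by
  simp only [isFixedPt_davisYin_and_eq_apply_iff hC₁ hC₂ hP₁ hP₂, exists_and_left]
  refine and_congr_right fun _ => ⟨?_, ?_⟩
  · rintro ⟨z, hu, hv⟩
    exact ⟨z - x, hu, -F x - (z - x), hv, add_sub_cancel _ _⟩
  · rintro ⟨u, hu, v, hv, huv : u + v = -F x⟩
    refine ⟨x + u, ?_, ?_⟩
    · rwa [add_sub_cancel_left]
    · rwa [add_sub_cancel_left, ← huv, add_sub_cancel_left]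

theorem stmt_8_general (hC₁ : Convex ℝ C₁) (hC₂ : Convex ℝ C₂)
    (hP₁ : IsMetricProjection C₁ P₁) (hP₂ : IsMetricProjection C₂ P₂)
    (hN : x ∈ C₁ ∩ C₂ → normalCone (C₁ ∩ C₂) x ⊆ normalCone C₁ x + normalCone C₂ x) :
    IsVISolution F (C₁ ∩ C₂) x ↔ ∃ z, IsFixedPt (davisYin P₁ P₂ F) z ∧ x = P₁ z := by
  rw [isVISolution_iff_neg_mem_normalCone, exists_isFixedPt_davisYin_iff hC₁ hC₂ hP₁ hP₂]
  exact and_congr_right fun hx =>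
    ⟨fun h => hN hx h, fun h => normalCone_add_subset_normalCone_inter h⟩

end DavisYin

/-- Assume the normal cone decomposition `N_C(x) = N_{C₁}(x) + N_{C₂}(x)` holds for every
`x ∈ C = C₁ ∩ C₂`.  Then `x₀` solves the variational inequality `VI(F, C)` iff there is a
fixed point `z₀` of the Davis–Yin operator
`T z = z - P₁ z + P₂ (2 • P₁ z - z - F (P₁ z))` with `x₀ = P₁ z₀`. -/
theorem stmt_8 {X : Type*} [NormedAddCommGroup X] [InnerProductSpace ℝ X] [CompleteSpace X]
    (C₁ C₂ : Set X)
    (h₁ne : C₁.Nonempty) (h₁cl : IsClosed C₁) (h₁cv : Convex ℝ C₁)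
    (h₂ne : C₂.Nonempty) (h₂cl : IsClosed C₂) (h₂cv : Convex ℝ C₂)
    (C : Set X) (hC : C = C₁ ∩ C₂) (hCne : C.Nonempty)
    (hNC : ∀ x ∈ C, ∀ w : X,
      (∀ y ∈ C, ⟪w, y - x⟫ ≤ 0) ↔
        ∃ u v : X, (∀ y ∈ C₁, ⟪u, y - x⟫ ≤ 0) ∧ (∀ y ∈ C₂, ⟪v, y - x⟫ ≤ 0) ∧ w = u + v)
    (P₁ P₂ : X → X)
    (hP₁ : ∀ z, P₁ z ∈ C₁ ∧ ∀ x ∈ C₁, ‖z - P₁ z‖ ≤ ‖z - x‖)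
    (hP₂ : ∀ z, P₂ z ∈ C₂ ∧ ∀ x ∈ C₂, ‖z - P₂ z‖ ≤ ‖z - x‖)
    (F : X → X) (T : X → X)
    (hT : ∀ z, T z = z - P₁ z + P₂ ((2 : ℝ) • P₁ z - z - F (P₁ z)))
    (x₀ : X) :
    (x₀ ∈ C ∧ ∀ x ∈ C, 0 ≤ ⟪F x₀, x - x₀⟫) ↔
      (∃ z₀, T z₀ = z₀ ∧ x₀ = P₁ z₀) := by
  obtain rfl : T = davisYin P₁ P₂ F := funext hT
  subst hC
  refine stmt_8_general h₁cv h₂cv hP₁ hP₂ fun hx w hw => ?_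
  obtain ⟨u, v, hu, hv, rfl⟩ := (hNC x₀ hx w).1 hw
  exact Set.add_mem_add hu hv
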